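/- Let c₀, M, f_λ, g_λ, a_λ, b_λ be as follows: c₀ > 0 is the unique positive real with e^{−c₀²/4} = 2∫₀^{c₀} e^{−x²/4} dx, M = ∫₀^{c₀} e^{−x²/4} dx, f_λ(a) = 2M a^{λ−1} e^{−a²/4} − 4M ∫₀^a r^{λ−1} e^{−r²/4} dr, g_λ(b) = 2M b^{λ−1} e^{−b²/4} + 4M ∫₀^b r^{λ−1} e^{−r²/4} dr, a_λ = −2+√(2(1+λ)), b_λ = 2+√(2(1+λ)). Then for every λ > λ₀ := (28 + 11√7)/9, f_{λ+2}(a_{λ+2}) + g_{λ+2}(b_{λ+2}) < 2λ ( f_λ(a_λ) + g_λ(b_λ) ). -/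

import Mathlib

open Real MeasureTheory

/-!
Put `w_p(x) = x ^ p * exp (-x ^ 2 / 4)` and `E_p(t) = w_p(t - 2) + w_p(t + 2)`. Since
`b_λ - a_λ = 4`, the sum `f_λ(a_λ) + g_λ(b_λ)` is `2M * F_{λ-1}(t)` at `t ^ 2 = 2λ + 2`, where
`F_p(t) = E_p(t) + 2 ∫_{t-2}^{t+2} w_p`. Integration by parts shows that `2λ F_{λ-1}` and `F_{λ+1}`
agree at `t ^ 2 = 2λ + 4`, and `F_p'(t) = (p + 2 - t ^ 2 / 2) E_{p-1}(t)`. Now let `t ^ 2` move away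
from `2λ + 4` at unit speed, downwards to `2λ + 2` in the first function and upwards to `2λ + 6` in
the second. The first grows faster because `E_λ(T) < 2λ E_{λ-2}(t)` whenever
`t ^ 2 = 2λ + 4 - z` and `T ^ 2 = 2λ + 4 + z` with `0 < z ≤ 2`: the two summands `w_λ(T ∓ 2)` have a
smaller product than the summands `2λ w_{λ-2}(t ∓ 2)`, and a quotient closer to `1`.
-/

/-- The Gaussian weight of the half-line `0 < x`; at negative `x` the real power is a junk value. -/
noncomputable def gaussWeight (p x : ℝ) : ℝ := x ^ p * exp (-x ^ 2 / 4)

/-- The total weight of the two endpoints of the window `[t - 2, t + 2]`. -/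
noncomputable def endpointWeight (p t : ℝ) : ℝ := gaussWeight p (t - 2) + gaussWeight p (t + 2)

/-- The endpoint weight of the window `[t - 2, t + 2]` plus twice the weight of its interior. For
`p = λ - 1` this is `(f_λ(t - 2) + g_λ(t + 2)) / (2M)`. -/
noncomputable def windowFunctional (p t : ℝ) : ℝ :=
  endpointWeight p t + 2 * ∫ r in (t - 2)..(t + 2), gaussWeight p r

section LogBounds

variable {a b : ℝ}

lemma two_mul_div_le_log_add_div_sub (hb : 0 ≤ b) (hba : b < a) :
    2 * b / a ≤ log ((a + b) / (a - b)) := by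
  have hsub : 0 < a - b := sub_pos.2 hba
  have h := le_log_one_add_of_nonneg (x := 2 * b / (a - b)) (by positivity)
  rw [show 1 + 2 * b / (a - b) = (a + b) / (a - b) by field_simp; ring] at h
  refine le_of_eq_of_le ?_ h
  have ha : 0 < a := by linarith
  rw [div_add' _ _ _ hsub.ne']
  field_simp
  ring

lemma log_add_div_sub_le (hb : 0 ≤ b) (hba : b < a) :
    log ((a + b) / (a - b)) ≤ 2 * a * b / (a ^ 2 - b ^ 2) := by
  have hsub : 0 < a - b := sub_pos.2 hba
  have hadd : 0 < a + b := by linarith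
  have hone : 1 ≤ (a + b) / (a - b) := by rw [le_div_iff₀ hsub]; linarith
  calc log ((a + b) / (a - b))
      ≤ sinh (log ((a + b) / (a - b))) := self_le_sinh_iff.2 (log_nonneg hone)
    _ = 2 * a * b / (a ^ 2 - b ^ 2) := by
      rw [sinh_log (by positivity), sq_sub_sq]
      field_simp
      ring

end LogBounds

section Weight

variable {a b p x : ℝ}

lemma gaussWeight_pos (hx : 0 < x) : 0 < gaussWeight p x :=
  mul_pos (rpow_pos_of_pos hx p) (exp_pos _)

lemma log_gaussWeight (hx : 0 < x) : log (gaussWeight p x) = p * log x - x ^ 2 / 4 := by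
  rw [gaussWeight, log_mul (rpow_pos_of_pos hx p).ne' (exp_pos _).ne', log_rpow hx, log_exp]
  ring

lemma gaussWeight_eq_mul (hx : 0 < x) : gaussWeight p x = x * gaussWeight (p - 1) x := by
  rw [gaussWeight, gaussWeight, rpow_sub_one hx.ne']
  field_simp

lemma intervalIntegrable_gaussWeight (hp : -1 < p) (a b : ℝ) :
    IntervalIntegrable (gaussWeight p) volume a b :=
  (intervalIntegral.intervalIntegrable_rpow' hp).mul_continuousOn (by fun_prop)

lemma hasDerivAt_gaussWeight (hx : 0 < x) :
    HasDerivAt (gaussWeight p) (p * gaussWeight (p - 1) x - gaussWeight (p + 1) x / 2) x := by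
  have hexp : HasDerivAt (fun y : ℝ => exp (-y ^ 2 / 4)) (exp (-x ^ 2 / 4) * (-(2 * x) / 4)) x := by
    simpa using ((hasDerivAt_pow 2 x).neg.div_const 4).exp
  refine ((hasDerivAt_rpow_const (Or.inl hx.ne')).mul hexp).congr_deriv ?_
  rw [gaussWeight, gaussWeight, rpow_add_one hx.ne']
  ring

lemma hasDerivAt_integral_gaussWeight (hp : -1 < p) (a : ℝ) (hx : 0 < x) :
    HasDerivAt (fun y => ∫ r in a..y, gaussWeight p r) (gaussWeight p x) x := by
  have hmeas : Measurable (gaussWeight p) := by unfold gaussWeight; fun_prop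
  exact intervalIntegral.integral_hasDerivAt_right (intervalIntegrable_gaussWeight hp a x)
    hmeas.stronglyMeasurable.stronglyMeasurableAtFilter (hasDerivAt_gaussWeight hx).continuousAt

lemma integral_gaussWeight_add_one (hp : 0 < p) (ha : 0 < a) (hb : 0 < b) :
    ∫ r in a..b, gaussWeight (p + 1) r
      = 2 * p * (∫ r in a..b, gaussWeight (p - 1) r) - 2 * (gaussWeight p b - gaussWeight p a) := by
  have hlow := intervalIntegrable_gaussWeight (p := p - 1) (by linarith) a b
  have hhigh := intervalIntegrable_gaussWeight (p := p + 1) (by linarith) a b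
  have hFTC := intervalIntegral.integral_eq_sub_of_hasDerivAt
    (fun r hr => hasDerivAt_gaussWeight (p := p) ((lt_min ha hb).trans_le hr.1))
    ((hlow.const_mul p).sub (hhigh.div_const 2))
  rw [intervalIntegral.integral_sub (hlow.const_mul p) (hhigh.div_const 2),
    intervalIntegral.integral_const_mul, intervalIntegral.integral_div] at hFTC
  linarith

end Weight

section Window

variable {l p t : ℝ}

lemma endpointWeight_pos (ht : 2 < t) : 0 < endpointWeight p t :=
  add_pos (gaussWeight_pos (by linarith)) (gaussWeight_pos (by linarith))

lemma windowFunctional_eq (hp : -1 < p) (t : ℝ) :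
    windowFunctional p t = (gaussWeight p (t - 2) - 2 * ∫ r in (0 : ℝ)..(t - 2), gaussWeight p r)
      + (gaussWeight p (t + 2) + 2 * ∫ r in (0 : ℝ)..(t + 2), gaussWeight p r) := by
  rw [windowFunctional, endpointWeight, ← intervalIntegral.integral_interval_sub_left
    (intervalIntegrable_gaussWeight hp 0 _) (intervalIntegrable_gaussWeight hp 0 _)]
  ring

lemma hasDerivAt_windowFunctional (hp : -1 < p) (ht : 2 < t) :
    HasDerivAt (windowFunctional p) ((p + 2 - t ^ 2 / 2) * endpointWeight (p - 1) t) t := by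
  have hleft : 0 < t - 2 := by linarith
  have hright : 0 < t + 2 := by linarith
  have dleft := ((hasDerivAt_gaussWeight (p := p) hleft).sub
    ((hasDerivAt_integral_gaussWeight hp 0 hleft).const_mul 2)).comp_sub_const t 2
  have dright := ((hasDerivAt_gaussWeight (p := p) hright).add
    ((hasDerivAt_integral_gaussWeight hp 0 hright).const_mul 2)).comp_add_const t 2
  rw [funext (windowFunctional_eq hp)]
  refine (dleft.add dright).congr_deriv ?_
  rw [gaussWeight_eq_mul (p := p + 1) hleft, gaussWeight_eq_mul (p := p + 1) hright,
    add_sub_cancel_right, gaussWeight_eq_mul (p := p) hleft, gaussWeight_eq_mul (p := p) hright,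
    endpointWeight]
  ring

lemma hasDerivAt_windowFunctional_sqrt {u : ℝ} (hp : -1 < p) (hu : 4 < u) :
    HasDerivAt (fun u => windowFunctional p √u)
      ((p + 2 - u / 2) * (endpointWeight (p - 1) √u / (2 * √u))) u := by
  have hsqrt : 2 < √u := lt_sqrt_of_sq_lt (by linarith)
  refine ((hasDerivAt_windowFunctional hp hsqrt).comp u
    (hasDerivAt_sqrt (by linarith))).congr_deriv ?_
  rw [sq_sqrt (by linarith)]
  ring

lemma windowFunctional_add_one (hl : 0 < l) (ht : 2 < t) (htl : t ^ 2 = 2 * l + 4) :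
    windowFunctional (l + 1) t = 2 * l * windowFunctional (l - 1) t := by
  have hleft : 0 < t - 2 := by linarith
  have hright : 0 < t + 2 := by linarith
  rw [windowFunctional, windowFunctional, integral_gaussWeight_add_one hl hleft hright,
    endpointWeight, endpointWeight, gaussWeight_eq_mul (p := l + 1) hleft,
    gaussWeight_eq_mul (p := l + 1) hright, add_sub_cancel_right,
    gaussWeight_eq_mul (p := l) hleft, gaussWeight_eq_mul (p := l) hright]
  linear_combination (gaussWeight (l - 1) (t - 2) + gaussWeight (l - 1) (t + 2)) * htl

end Window

section EndpointComparison

variable {a b c d l p t T z : ℝ}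

lemma add_lt_add_of_mul_lt_of_div_le (hb : 0 < b) (hd : 0 < d) (ha : 0 < a) (hdc : d ≤ c)
    (hmul : c * d < a * b) (hdiv : c / d ≤ a / b) : c + d < a + b := by
  have hc : 0 < c := hd.trans_le hdc
  have hca : c < a := by
    refine lt_of_pow_lt_pow_left₀ 2 ha.le ?_
    calc c ^ 2 = c * d * (c / d) := by field_simp
      _ < a * b * (c / d) := by gcongr
      _ ≤ a * b * (a / b) := by gcongr
      _ = a ^ 2 := by field_simp
  refine lt_of_mul_lt_mul_left ?_ ha.le
  nlinarith [mul_pos (sub_pos.2 hca) (sub_pos.2 (hdc.trans_lt hca))]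

lemma log_gaussWeight_sub_two_add_log_gaussWeight_add_two (ht : 2 < t) :
    log (gaussWeight p (t - 2)) + log (gaussWeight p (t + 2))
      = p * log (t ^ 2 - 4) - (t ^ 2 + 4) / 2 := by
  have hleft : 0 < t - 2 := by linarith
  have hright : 0 < t + 2 := by linarith
  rw [log_gaussWeight hleft, log_gaussWeight hright,
    show t ^ 2 - 4 = (t - 2) * (t + 2) by ring, log_mul hleft.ne' hright.ne']
  ring

lemma log_gaussWeight_sub_two_div_gaussWeight_add_two (ht : 2 < t) :
    log (gaussWeight p (t - 2) / gaussWeight p (t + 2))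
      = 2 * t - p * log ((t + 2) / (t - 2)) := by
  have hleft : 0 < t - 2 := by linarith
  have hright : 0 < t + 2 := by linarith
  rw [log_div (gaussWeight_pos hleft).ne' (gaussWeight_pos hright).ne', log_gaussWeight hleft,
    log_gaussWeight hright, log_div hright.ne' hleft.ne']
  ring

lemma gaussWeight_add_two_le_gaussWeight_sub_two (ht : 2 < t) (hp : 2 * p ≤ t ^ 2 - 4) :
    gaussWeight p (t + 2) ≤ gaussWeight p (t - 2) := by
  have hleft : 0 < t - 2 := by linarith
  have hright : 0 < t + 2 := by linarith
  have hsq : 0 < t ^ 2 - 2 ^ 2 := by nlinarith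
  have hlog : 0 ≤ log ((t + 2) / (t - 2)) :=
    log_nonneg (by rw [le_div_iff₀ hleft]; linarith)
  rw [← one_le_div (gaussWeight_pos hright), ← log_nonneg_iff
    (div_pos (gaussWeight_pos hleft) (gaussWeight_pos hright)),
    log_gaussWeight_sub_two_div_gaussWeight_add_two ht, sub_nonneg]
  calc p * log ((t + 2) / (t - 2))
      ≤ (t ^ 2 - 2 ^ 2) / 2 * log ((t + 2) / (t - 2)) := by gcongr; linarith
    _ ≤ (t ^ 2 - 2 ^ 2) / 2 * (2 * t * 2 / (t ^ 2 - 2 ^ 2)) := by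
      gcongr
      exact log_add_div_sub_le zero_le_two ht
    _ = 2 * t := by field_simp

lemma mul_log_add_sub_mul_log_sub_lt (hl : 1 < l) (hz : 0 < z) (hz2 : z ≤ 2) :
    l * log (2 * l + z) - (l - 2) * log (2 * l - z) < 2 * log (2 * l) + z := by
  have hsub : 0 < 2 * l - z := by linarith
  have hadd : 0 < 2 * l + z := by linarith
  have hsq : 0 < (2 * l) ^ 2 - z ^ 2 := by nlinarith
  have hconcave : log (2 * l + z) + log (2 * l - z) < 2 * log (2 * l) := by
    rw [← log_mul hadd.ne' hsub.ne', ← Nat.cast_two (R := ℝ), ← log_pow]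
    exact log_lt_log (mul_pos hadd hsub) (by push_cast; nlinarith)
  have hquot : (l - 1) * (log (2 * l + z) - log (2 * l - z)) ≤ z := by
    rw [← log_div hadd.ne' hsub.ne']
    calc (l - 1) * log ((2 * l + z) / (2 * l - z))
        ≤ (l - 1) * (2 * (2 * l) * z / ((2 * l) ^ 2 - z ^ 2)) :=
          mul_le_mul_of_nonneg_left (log_add_div_sub_le hz.le (sub_pos.1 hsub)) (by linarith)
      _ ≤ z := by
          rw [mul_div_assoc', div_le_iff₀ hsq]
          nlinarith [mul_nonneg hz.le (show 0 ≤ 4 * l - z ^ 2 by nlinarith)]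
  linarith

lemma gaussWeight_mul_lt (hl : 1 < l) (hz : 0 < z) (hz2 : z ≤ 2) (ht : 2 < t) (hT : 2 < T)
    (htz : t ^ 2 = 2 * l + 4 - z) (hTz : T ^ 2 = 2 * l + 4 + z) :
    gaussWeight l (T - 2) * gaussWeight l (T + 2)
      < (2 * l * gaussWeight (l - 2) (t - 2)) * (2 * l * gaussWeight (l - 2) (t + 2)) := by
  have hTleft : 0 < gaussWeight l (T - 2) := gaussWeight_pos (by linarith)
  have hTright : 0 < gaussWeight l (T + 2) := gaussWeight_pos (by linarith)
  have htleft : 0 < gaussWeight (l - 2) (t - 2) := gaussWeight_pos (by linarith)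
  have htright : 0 < gaussWeight (l - 2) (t + 2) := gaussWeight_pos (by linarith)
  have hlog := mul_log_add_sub_mul_log_sub_lt hl hz hz2
  have hlogT := log_gaussWeight_sub_two_add_log_gaussWeight_add_two (p := l) hT
  have hlogt := log_gaussWeight_sub_two_add_log_gaussWeight_add_two (p := l - 2) ht
  rw [show T ^ 2 - 4 = 2 * l + z by linarith, hTz] at hlogT
  rw [show t ^ 2 - 4 = 2 * l - z by linarith, htz] at hlogt
  rw [← log_lt_log_iff (by positivity) (by positivity), log_mul hTleft.ne' hTright.ne',
    log_mul (by positivity) (by positivity), log_mul (by positivity) htleft.ne',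
    log_mul (by positivity) htright.ne']
  linarith

lemma log_endpoint_ratio_sub_le (hl : 1 < l) (hz : 0 < z) (hz2 : z ≤ 2) (ht : 2 < t) (hT : 2 < T)
    (htz : t ^ 2 = 2 * l + 4 - z) (hTz : T ^ 2 = 2 * l + 4 + z) :
    (l - 1) * (log ((t + 2) / (t - 2)) - log ((T + 2) / (T - 2)))
      ≤ l / (l + 1) * (2 * (T - t)) := by
  have htleft : 0 < t - 2 := by linarith
  have hTleft : 0 < T - 2 := by linarith
  have htT : t < T := by nlinarith
  have hlower : 2 * (T - t) < t * T - 4 := by nlinarith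
  have hupper : t * T - 4 ≤ 2 * l := by nlinarith [sq_nonneg (T - t)]
  have hsq : (t * T - 4) ^ 2 - (2 * (T - t)) ^ 2 = 4 * l ^ 2 - z ^ 2 := by
    rw [show (t * T - 4) ^ 2 - (2 * (T - t)) ^ 2 = (t ^ 2 - 4) * (T ^ 2 - 4) by ring, htz, hTz]
    ring
  have hpos : 0 < 4 * l ^ 2 - z ^ 2 := by nlinarith
  have hlog : log ((t + 2) / (t - 2)) - log ((T + 2) / (T - 2))
      ≤ 2 * (2 * l) * (2 * (T - t)) / (4 * l ^ 2 - z ^ 2) := by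
    rw [← log_div (div_pos (by linarith) htleft).ne' (div_pos (by linarith) hTleft).ne',
      show (t + 2) / (t - 2) / ((T + 2) / (T - 2))
        = (t * T - 4 + 2 * (T - t)) / (t * T - 4 - 2 * (T - t)) by
          rw [div_div_div_eq]; congr 1 <;> ring]
    refine (log_add_div_sub_le (by linarith) hlower).trans ?_
    rw [hsq]
    have : 0 ≤ T - t := by linarith
    gcongr
  calc (l - 1) * (log ((t + 2) / (t - 2)) - log ((T + 2) / (T - 2)))
      ≤ (l - 1) * (2 * (2 * l) * (2 * (T - t)) / (4 * l ^ 2 - z ^ 2)) := by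
        gcongr
    _ = (l - 1) * (4 * l) / (4 * l ^ 2 - z ^ 2) * (2 * (T - t)) := by ring
    _ ≤ l / (l + 1) * (2 * (T - t)) := by
        refine mul_le_mul_of_nonneg_right ?_ (by linarith)
        rw [div_le_div_iff₀ hpos (by linarith)]
        nlinarith [mul_nonneg (zero_le_one.trans hl.le) (show 0 ≤ 4 - z ^ 2 by nlinarith)]

lemma mul_sub_le_log_endpoint_ratio (hl : 1 < l) (hz : 0 < z) (hz2 : z ≤ 2) (ht : 2 < t)
    (hT : 2 < T) (htz : t ^ 2 = 2 * l + 4 - z) (hTz : T ^ 2 = 2 * l + 4 + z) :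
    (2 * l + 1) / (l + 1) * (2 * (T - t)) ≤ 2 * log ((T + 2) / (T - 2)) := by
  have hratio : l * T ≤ (l + 1) * t := by
    refine le_of_sq_le_sq ?_ (mul_pos (by linarith) (by linarith)).le
    rw [mul_pow, mul_pow, htz, hTz]
    nlinarith [mul_nonneg (sub_nonneg.2 hz2) (by positivity : 0 ≤ l ^ 2 + (l + 1) ^ 2)]
  have hdiff : (T - t) * (T + t) ≤ 4 := by nlinarith
  have hmul : (2 * l + 1) * (T - t) * T ≤ 4 * (l + 1) := by
    have htT : 0 ≤ T - t := by nlinarith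
    calc (2 * l + 1) * (T - t) * T
        = (T - t) * ((l + 1) * T + l * T) := by ring
      _ ≤ (T - t) * ((l + 1) * T + (l + 1) * t) := by gcongr
      _ = (l + 1) * ((T - t) * (T + t)) := by ring
      _ ≤ (l + 1) * 4 := mul_le_mul_of_nonneg_left hdiff (by linarith)
      _ = 4 * (l + 1) := by ring
  calc (2 * l + 1) / (l + 1) * (2 * (T - t))
      ≤ 2 * (2 * 2 / T) := by
        rw [div_mul_eq_mul_div, mul_div_assoc', div_le_div_iff₀ (by linarith) (by linarith)]
        linarith
    _ ≤ 2 * log ((T + 2) / (T - 2)) := by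
        gcongr
        exact two_mul_div_le_log_add_div_sub zero_le_two hT

lemma gaussWeight_div_le (hl : 1 < l) (hz : 0 < z) (hz2 : z ≤ 2) (ht : 2 < t) (hT : 2 < T)
    (htz : t ^ 2 = 2 * l + 4 - z) (hTz : T ^ 2 = 2 * l + 4 + z) :
    gaussWeight l (T - 2) / gaussWeight l (T + 2)
      ≤ gaussWeight (l - 2) (t - 2) / gaussWeight (l - 2) (t + 2) := by
  have htleft : 0 < t - 2 := by linarith
  have hTleft : 0 < T - 2 := by linarith
  have htT : t ≤ T := by nlinarith
  have hanti : log ((T + 2) / (T - 2)) ≤ log ((t + 2) / (t - 2)) := by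
    refine log_le_log (by positivity) ?_
    rw [div_le_div_iff₀ hTleft htleft]
    linarith
  have hsub := log_endpoint_ratio_sub_le hl hz hz2 ht hT htz hTz
  have hmul := mul_sub_le_log_endpoint_ratio hl hz hz2 ht hT htz hTz
  have hsplit : (2 * l + 1) / (l + 1) = 1 + l / (l + 1) := by
    field_simp
    ring
  rw [hsplit] at hmul
  rw [← log_le_log_iff
      (div_pos (gaussWeight_pos hTleft) (gaussWeight_pos (by linarith)))
      (div_pos (gaussWeight_pos htleft) (gaussWeight_pos (by linarith))),
    log_gaussWeight_sub_two_div_gaussWeight_add_two ht,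
    log_gaussWeight_sub_two_div_gaussWeight_add_two hT]
  linarith

lemma endpointWeight_lt (hl : 1 < l) (hz : 0 < z) (hz2 : z ≤ 2) (ht : 2 < t) (hT : 2 < T)
    (htz : t ^ 2 = 2 * l + 4 - z) (hTz : T ^ 2 = 2 * l + 4 + z) :
    endpointWeight l T < 2 * l * endpointWeight (l - 2) t := by
  have hl0 : 0 < 2 * l := by linarith
  rw [endpointWeight, endpointWeight, mul_add]
  refine add_lt_add_of_mul_lt_of_div_le (mul_pos hl0 (gaussWeight_pos (by linarith)))
    (gaussWeight_pos (by linarith)) (mul_pos hl0 (gaussWeight_pos (by linarith)))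
    (gaussWeight_add_two_le_gaussWeight_sub_two hT (by linarith))
    (gaussWeight_mul_lt hl hz hz2 ht hT htz hTz) ?_
  rw [mul_div_mul_left _ _ hl0.ne']
  exact gaussWeight_div_le hl hz hz2 ht hT htz hTz

end EndpointComparison

section InductionStep

variable {l z : ℝ}

/-- The gap in the induction step, interpolated from the window `t ^ 2 = 2 * l + 4` at `z = 0` to
the two windows of the theorem at `z = 2`. Moving the squares at unit speed gives the two
derivatives the common factor `1 - z / 2`. -/
noncomputable def windowGap (l z : ℝ) : ℝ :=
  2 * l * windowFunctional (l - 1) √(2 * l + 4 - z) - windowFunctional (l + 1) √(2 * l + 4 + z)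

lemma windowGap_zero (hl : 0 < l) : windowGap l 0 = 0 := by
  have hsqrt : 2 < √(2 * l + 4) := lt_sqrt_of_sq_lt (by linarith)
  rw [windowGap, sub_zero, add_zero,
    windowFunctional_add_one hl hsqrt (sq_sqrt (by linarith)), sub_self]

lemma hasDerivAt_windowGap (hl : 1 < l) (hz : 0 ≤ z) (hz2 : z ≤ 2) :
    HasDerivAt (windowGap l)
      ((1 - z / 2) * (2 * l * endpointWeight (l - 2) √(2 * l + 4 - z) / (2 * √(2 * l + 4 - z))
        - endpointWeight l √(2 * l + 4 + z) / (2 * √(2 * l + 4 + z)))) z := by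
  have dlow := (hasDerivAt_windowFunctional_sqrt (p := l - 1) (u := 2 * l + 4 - z)
    (by linarith) (by linarith)).comp_const_sub (2 * l + 4) z
  have dhigh := (hasDerivAt_windowFunctional_sqrt (p := l + 1) (u := 2 * l + 4 + z)
    (by linarith) (by linarith)).comp_const_add (2 * l + 4) z
  refine ((dlow.const_mul (2 * l)).sub dhigh).congr_deriv ?_
  rw [show l - 1 - 1 = l - 2 by ring, add_sub_cancel_right]
  ring

lemma strictMonoOn_windowGap (hl : 1 < l) : StrictMonoOn (windowGap l) (Set.Icc 0 2) := by
  refine strictMonoOn_of_deriv_pos (convex_Icc 0 2)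
    (fun z hz => (hasDerivAt_windowGap hl hz.1 hz.2).continuousAt.continuousWithinAt)
    fun z hz => ?_
  obtain ⟨hz0, hz2⟩ : 0 < z ∧ z < 2 := by rwa [interior_Icc] at hz
  have ht : 2 < √(2 * l + 4 - z) := lt_sqrt_of_sq_lt (by linarith)
  have hT : 2 < √(2 * l + 4 + z) := lt_sqrt_of_sq_lt (by linarith)
  have hE := endpointWeight_lt hl hz0 hz2.le ht hT (sq_sqrt (by linarith)) (sq_sqrt (by linarith))
  have hsqrt : √(2 * l + 4 - z) ≤ √(2 * l + 4 + z) := sqrt_le_sqrt (by linarith)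
  rw [(hasDerivAt_windowGap hl hz0.le hz2.le).deriv]
  refine mul_pos (by linarith) (sub_pos.2 ?_)
  exact div_lt_div₀ hE (by linarith) ((endpointWeight_pos hT).trans hE).le (by linarith)

theorem windowFunctional_add_one_lt (hl : 1 < l) :
    windowFunctional (l + 1) √(2 * l + 6) < 2 * l * windowFunctional (l - 1) √(2 * l + 2) := by
  have hgap := strictMonoOn_windowGap hl (by norm_num : (0 : ℝ) ∈ Set.Icc 0 2)
    (by norm_num : (2 : ℝ) ∈ Set.Icc 0 2) two_pos
  rw [windowGap_zero (by linarith), windowGap, sub_pos,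
    show 2 * l + 4 - 2 = 2 * l + 2 by ring, show 2 * l + 4 + 2 = 2 * l + 6 by ring] at hgap
  exact hgap

theorem induction_step_inequality_general (M : ℝ) (hM : 0 < M) (f g : ℝ → ℝ → ℝ) (A B : ℝ → ℝ)
    (hf : ∀ mu a : ℝ, f mu a = 2 * M * a ^ (mu - 1) * exp (-a ^ 2 / 4)
        - 4 * M * ∫ r in (0 : ℝ)..a, r ^ (mu - 1) * exp (-r ^ 2 / 4))
    (hg : ∀ mu b : ℝ, g mu b = 2 * M * b ^ (mu - 1) * exp (-b ^ 2 / 4)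
        + 4 * M * ∫ r in (0 : ℝ)..b, r ^ (mu - 1) * exp (-r ^ 2 / 4))
    (hA : ∀ mu : ℝ, A mu = -2 + √(2 * (1 + mu)))
    (hB : ∀ mu : ℝ, B mu = 2 + √(2 * (1 + mu)))
    (lam : ℝ) (hlam : 1 < lam) :
    f (lam + 2) (A (lam + 2)) + g (lam + 2) (B (lam + 2))
      < 2 * lam * (f lam (A lam) + g lam (B lam)) := by
  have hfg (mu : ℝ) (hmu : 0 < mu) :
      f mu (A mu) + g mu (B mu) = 2 * M * windowFunctional (mu - 1) √(2 * (1 + mu)) := by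
    rw [windowFunctional_eq (by linarith), hf, hg, hA, hB, neg_add_eq_sub, add_comm 2 √_]
    simp only [gaussWeight]
    ring
  rw [hfg _ (by linarith), hfg _ (by linarith), mul_left_comm,
    show lam + 2 - 1 = lam + 1 by ring, show 2 * (1 + (lam + 2)) = 2 * lam + 6 by ring,
    show 2 * (1 + lam) = 2 * lam + 2 by ring]
  exact mul_lt_mul_of_pos_left (windowFunctional_add_one_lt hlam) (by positivity)

end InductionStep

/-- The induction-step inequality
`f_{λ+2}(a_{λ+2}) + g_{λ+2}(b_{λ+2}) < 2λ (f_λ(a_λ) + g_λ(b_λ))`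
for `λ > λ₀ = (28 + 11√7)/9`. -/
theorem induction_step_inequality (c0 M : ℝ) (hc0 : 0 < c0)
    (hc0eq : exp (-c0 ^ 2 / 4) = 2 * ∫ x in (0:ℝ)..c0, exp (-x ^ 2 / 4))
    (hM : M = ∫ x in (0:ℝ)..c0, exp (-x ^ 2 / 4))
    (f g : ℝ → ℝ → ℝ) (A B : ℝ → ℝ)
    (hf : ∀ mu a : ℝ, f mu a = 2 * M * a ^ (mu - 1) * exp (-a ^ 2 / 4)
        - 4 * M * ∫ r in (0:ℝ)..a, r ^ (mu - 1) * exp (-r ^ 2 / 4))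
    (hg : ∀ mu b : ℝ, g mu b = 2 * M * b ^ (mu - 1) * exp (-b ^ 2 / 4)
        + 4 * M * ∫ r in (0:ℝ)..b, r ^ (mu - 1) * exp (-r ^ 2 / 4))
    (hA : ∀ mu : ℝ, A mu = -2 + Real.sqrt (2 * (1 + mu)))
    (hB : ∀ mu : ℝ, B mu = 2 + Real.sqrt (2 * (1 + mu)))
    (lam : ℝ) (hlam : (28 + 11 * Real.sqrt 7) / 9 < lam) :
    f (lam + 2) (A (lam + 2)) + g (lam + 2) (B (lam + 2))
      < 2 * lam * (f lam (A lam) + g lam (B lam)) := by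
  have hM_pos : 0 < M := by linarith [exp_pos (-c0 ^ 2 / 4)]
  exact induction_step_inequality_general M hM_pos f g A B hf hg hA hB lam
    (by linarith [sqrt_nonneg 7])
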